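/- arXiv:1405.5293 — 2 statements merged into one kernel-verified Lean document; each statement's English description precedes it below -/
import Mathlib

section
/- For every ideal I of R = ℂ[x₁,…,xₙ] and every f ∈ R, differentiation of the dual space by f yields the dual space of the colon ideal: σ_f D₀[I] = D₀[I : ⟨f⟩], where I : ⟨f⟩ = {g ∈ R : f·g ∈ I}. -/
open MvPolynomial

noncomputable section

/-- The polynomial ring `R = ℂ[x₁,…,xₙ]`. -/
abbrev Rn (n : ℕ) := MvPolynomial (Fin n) ℂ

/-- Total degree of a monomial exponent vector. -/
def mdeg {n : ℕ} (m : Fin n →₀ ℕ) : ℕ := m.sum fun _ e => e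

/-- The truncated dual space `D₀^d`: linear functionals on `R` vanishing on all
monomials of degree greater than `d` (identified with `(R_d)*`). -/
def DualTrunc (n d : ℕ) : Submodule ℂ (Module.Dual ℂ (Rn n)) where
  carrier := {p | ∀ m : Fin n →₀ ℕ, d < mdeg m → p (monomial m 1) = 0}
  add_mem' := by
    intro p q hp hq m hm
    simp [hp m hm, hq m hm]
  zero_mem' := by
    intro m hm
    simp
  smul_mem' := by
    intro c p hp m hm
    simp [hp m hm]

/-- The Macaulay dual space `D₀` at the origin: linear functionals on `R` vanishing
on all monomials of sufficiently large degree, i.e. `⋃ d, D₀^d`. -/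
def MacaulayDual (n : ℕ) : Submodule ℂ (Module.Dual ℂ (Rn n)) where
  carrier := {p | ∃ d : ℕ, ∀ m : Fin n →₀ ℕ, d < mdeg m → p (monomial m 1) = 0}
  add_mem' := by
    rintro p q ⟨d₁, hp⟩ ⟨d₂, hq⟩
    refine ⟨max d₁ d₂, fun m hm => ?_⟩
    simp [hp m (lt_of_le_of_lt (le_max_left _ _) hm),
          hq m (lt_of_le_of_lt (le_max_right _ _) hm)]
  zero_mem' := ⟨0, fun m _ => rfl⟩
  smul_mem' := by
    rintro c p ⟨d, hp⟩
    exact ⟨d, fun m hm => by simp [hp m hm]⟩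

/-- The space of linear functionals annihilating an ideal `I`. -/
def annIdeal {n : ℕ} (I : Ideal (Rn n)) : Submodule ℂ (Module.Dual ℂ (Rn n)) where
  carrier := {p | ∀ f ∈ I, p f = 0}
  add_mem' := by
    intro p q hp hq f hf
    simp [hp f hf, hq f hf]
  zero_mem' := by intro f _; rfl
  smul_mem' := by
    intro c p hp f hf
    simp [hp f hf]

/-- The Macaulay dual space `D₀[I] = {p ∈ D₀ : p(f) = 0 for all f ∈ I}`. -/
def dualOf {n : ℕ} (I : Ideal (Rn n)) : Submodule ℂ (Module.Dual ℂ (Rn n)) :=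
  MacaulayDual n ⊓ annIdeal I

/-- The truncated dual space `D₀^d[I] = D₀[I] ∩ D₀^d`. -/
def truncDualOf {n : ℕ} (I : Ideal (Rn n)) (d : ℕ) : Submodule ℂ (Module.Dual ℂ (Rn n)) :=
  DualTrunc n d ⊓ annIdeal I

/-- The contraction `IR₀ ∩ R` of the extension of `I` to the localization at the
origin: `{g ∈ R : ∃ h ∈ R with h(0) ≠ 0 and h·g ∈ I}`. -/
def contraction {n : ℕ} (I : Ideal (Rn n)) : Set (Rn n) :=
  {g | ∃ h : Rn n, eval (0 : Fin n → ℂ) h ≠ 0 ∧ h * g ∈ I}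

/-- The maximal ideal `m = ⟨x₁,…,xₙ⟩` at the origin, as the kernel of evaluation at `0`. -/
def mIdeal (n : ℕ) : Ideal (Rn n) := RingHom.ker (eval (0 : Fin n → ℂ))

instance (n : ℕ) : (mIdeal n).IsPrime := RingHom.ker_isPrime _

/-- The localization `R₀` of `R` at the maximal ideal of the origin. -/
abbrev Loc (n : ℕ) := Localization.AtPrime (mIdeal n)

/-- The extension `JR₀` of an ideal `J ⊆ R` to the localization `R₀`. -/
def extIdeal {n : ℕ} (J : Ideal (Rn n)) : Ideal (Loc n) :=
  J.map (algebraMap (Rn n) (Loc n))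

/-- Differentiation `σ_f : D₀ → D₀` by `f ∈ R`, `(σ_f p)(g) = p (f * g)`. -/
def sigma {n : ℕ} (f : Rn n) : Module.Dual ℂ (Rn n) →ₗ[ℂ] Module.Dual ℂ (Rn n) :=
  (LinearMap.mulLeft ℂ f).dualMap

/-- A graded monomial order on exponent vectors in `ℕⁿ`: a strict total order
compatible with addition and refining total degree. -/
structure IsGradedMonomialOrder {n : ℕ} (lt : (Fin n →₀ ℕ) → (Fin n →₀ ℕ) → Prop) : Prop where
  irrefl : ∀ a, ¬ lt a a
  trans : ∀ a b c, lt a b → lt b c → lt a c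
  total : ∀ a b, a ≠ b → lt a b ∨ lt b a
  add_compat : ∀ a b c, lt a b → lt (a + c) (b + c)
  deg_compat : ∀ a b, mdeg a < mdeg b → lt a b

/-- `β` is the lead monomial of `g` for the graded local order associated to `lt`:
the `lt`-minimal monomial of `g` with nonzero coefficient. -/
def IsLeadMonomial {n : ℕ} (lt : (Fin n →₀ ℕ) → (Fin n →₀ ℕ) → Prop)
    (g : Rn n) (β : Fin n →₀ ℕ) : Prop :=
  coeff β g ≠ 0 ∧ ∀ γ : Fin n →₀ ℕ, coeff γ g ≠ 0 → γ ≠ β → lt β γ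

/-- The initial ideal `in_≥(IR₀) ∩ R`: the monomial ideal of `R` generated by the
lead monomials of nonzero elements of the contraction `IR₀ ∩ R`. -/
def initialIdeal {n : ℕ} (lt : (Fin n →₀ ℕ) → (Fin n →₀ ℕ) → Prop)
    (I : Ideal (Rn n)) : Ideal (Rn n) :=
  Ideal.span {q | ∃ g ∈ contraction I, g ≠ 0 ∧
    ∃ β : Fin n →₀ ℕ, IsLeadMonomial lt g β ∧ q = monomial β 1}

/-- `∂^α` is (up to the scalar `p(x^α)`) the initial term of the dual functional `p`:
`α` is the `lt`-maximal monomial with nonzero coefficient in `p`. -/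
def IsInitialOf {n : ℕ} (lt : (Fin n →₀ ℕ) → (Fin n →₀ ℕ) → Prop)
    (p : Module.Dual ℂ (Rn n)) (α : Fin n →₀ ℕ) : Prop :=
  p (monomial α 1) ≠ 0 ∧ ∀ β : Fin n →₀ ℕ, p (monomial β 1) ≠ 0 → β ≠ α → lt β α

/-!
`D₀` consists of the functionals killing some power of `J = ⟨x₁,…,xₙ⟩`, so `D₀[I]` is the union of
the annihilators of the `I + Jᵈ`. Over a field, transposing multiplication by `f` carries the
annihilator of a subspace onto the annihilator of its preimage; hence `σ_f D₀[I]` is the union of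
the annihilators of the `(I + Jᵈ) : f`, while `D₀[I : f]` is that of the annihilators of the
`(I : f) + Jᵈ`. By Artin–Rees these two descending families of ideals are cofinal in each other.
The same argument applies to any linear map into a finite module over a Noetherian algebra, with
preimages in place of colons.
-/

section DualAnnihilator

variable {K V W : Type*} [Field K] [AddCommGroup V] [Module K V] [AddCommGroup W] [Module K W]

theorem map_dualMap_dualAnnihilator (φ : V →ₗ[K] W) (U : Submodule K W) :
    U.dualAnnihilator.map φ.dualMap = (U.comap φ).dualAnnihilator := by
  calc U.dualAnnihilator.map φ.dualMap
      = (U.mkQ ∘ₗ φ).dualMap.range := by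
        rw [← LinearMap.dualMap_comp_dualMap, LinearMap.range_comp, U.range_dualMap_mkQ_eq]
    _ = (U.comap φ).dualAnnihilator := by
        rw [LinearMap.range_dualMap_eq_dualAnnihilator_ker, LinearMap.ker_comp, U.ker_mkQ]

end DualAnnihilator

theorem colon_span_singleton_eq_comap_mulLeft {A : Type*} [CommSemiring A] (I : Ideal A)
    (f : A) : I.colon (Ideal.span {f}) = Submodule.comap (LinearMap.mulLeft A f) I := by
  ext g
  rw [Ideal.mem_colon_span_singleton, Submodule.mem_comap, LinearMap.mulLeft_apply, mul_comm]

section ArtinRees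

variable {A M N : Type*} [CommRing A] [IsNoetherianRing A] [AddCommGroup M] [Module A M]
  [AddCommGroup N] [Module A N] [Module.Finite A N]

theorem exists_pow_smul_top_inf_le (J : Ideal A) (P : Submodule A N) (d : ℕ) :
    ∃ e : ℕ, J ^ e • ⊤ ⊓ P ≤ J ^ d • P := by
  obtain ⟨k, hk⟩ := J.exists_pow_inf_eq_pow_smul P
  refine ⟨k + d, ?_⟩
  rw [hk (k + d) (Nat.le_add_right k d), Nat.add_sub_cancel_left]
  exact smul_mono_right _ inf_le_right

theorem exists_comap_sup_pow_smul_top_le (J : Ideal A) (φ : M →ₗ[A] N) (P : Submodule A N)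
    (d : ℕ) : ∃ e : ℕ, (P ⊔ J ^ e • ⊤).comap φ ≤ P.comap φ ⊔ J ^ d • ⊤ := by
  obtain ⟨e, he⟩ := exists_pow_smul_top_inf_le J (P ⊔ φ.range) d
  have inf_range_le : (P ⊔ J ^ e • ⊤) ⊓ (P ⊔ φ.range) ≤ (P.comap φ ⊔ J ^ d • ⊤).map φ ⊔ P := calc
    (P ⊔ J ^ e • ⊤) ⊓ (P ⊔ φ.range)
      = P ⊔ J ^ e • ⊤ ⊓ (P ⊔ φ.range) := sup_inf_assoc_of_le _ le_sup_left
    _ ≤ P ⊔ J ^ d • (P ⊔ φ.range) := sup_le_sup_left he P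
    _ = P ⊔ (J ^ d • ⊤ : Submodule A M).map φ := by
        rw [Submodule.smul_sup, ← sup_assoc, sup_eq_left.mpr (Submodule.smul_le_right (N := P)),
          Submodule.map_smul'', Submodule.map_top]
    _ ≤ (P.comap φ ⊔ J ^ d • ⊤).map φ ⊔ P :=
        sup_le le_sup_right (le_sup_of_le_left (Submodule.map_mono le_sup_right))
  refine ⟨e, fun x hx ↦ ?_⟩
  rw [← Submodule.comap_map_sup_of_comap_le (le_sup_left (a := P.comap φ) (b := J ^ d • ⊤))]
  exact inf_range_le ⟨hx, Submodule.mem_sup_right (φ.mem_range_self x)⟩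

end ArtinRees

section AdicDual

variable (K : Type*) {A M : Type*} [CommRing K] [CommRing A] [Algebra K A]
  [AddCommGroup M] [Module K M] [Module A M] [IsScalarTower K A M]

/-- The `J`-adic dual space of a submodule `P ≤ M`: the `K`-linear functionals on `M` that vanish
on `P` and are continuous for the `J`-adic topology, that is, vanish on some `Jᵈ M`. For `M = A` a
polynomial ring, `J` the ideal of the origin and `P` an ideal, it is the Macaulay dual space of
`P`. It is encoded as the union of the annihilators of the `P + Jᵈ M`. -/
def adicDual (J : Ideal A) (P : Submodule A M) : Submodule K (Module.Dual K M) :=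
  ⨆ d : ℕ, ((P ⊔ J ^ d • ⊤).restrictScalars K).dualAnnihilator

variable {K} in
theorem mem_adicDual_iff {J : Ideal A} {P : Submodule A M} {p : Module.Dual K M} :
    p ∈ adicDual K J P ↔
      (∃ d : ℕ, p ∈ ((J ^ d • ⊤ : Submodule A M).restrictScalars K).dualAnnihilator) ∧
        p ∈ (P.restrictScalars K).dualAnnihilator := by
  have mono : Monotone fun d : ℕ ↦ ((P ⊔ J ^ d • ⊤).restrictScalars K).dualAnnihilator :=
    fun _ _ hde ↦ Submodule.dualAnnihilator_anti
      (sup_le_sup_left (Submodule.pow_smul_top_le J M hde) P)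
  rw [adicDual, Submodule.mem_iSup_of_directed _ mono.directed_le]
  simp only [Submodule.restrictScalars_sup, Submodule.dualAnnihilator_sup_eq, Submodule.mem_inf,
    exists_and_left, and_comm]

end AdicDual

section AdicDualMap

variable (K : Type*) {A M N : Type*} [Field K] [CommRing A] [IsNoetherianRing A] [Algebra K A]
  [AddCommGroup M] [Module K M] [Module A M] [IsScalarTower K A M]
  [AddCommGroup N] [Module K N] [Module A N] [IsScalarTower K A N] [Module.Finite A N]

theorem map_dualMap_adicDual (J : Ideal A) (φ : M →ₗ[A] N) (P : Submodule A N) :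
    (adicDual K J P).map (φ.restrictScalars K).dualMap = adicDual K J (P.comap φ) := by
  have map_eq : (adicDual K J P).map (φ.restrictScalars K).dualMap =
      ⨆ d : ℕ, (((P ⊔ J ^ d • ⊤).comap φ).restrictScalars K).dualAnnihilator := by
    simp only [adicDual, Submodule.map_iSup, map_dualMap_dualAnnihilator]
    rfl
  rw [map_eq]
  apply le_antisymm
  · refine iSup_mono fun d ↦ Submodule.dualAnnihilator_anti ?_
    exact sup_le (Submodule.comap_mono le_sup_left) <|
      (Submodule.smul_top_le_comap_smul_top _ φ).trans (Submodule.comap_mono le_sup_right)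
  · refine iSup_mono' fun d ↦ ?_
    obtain ⟨e, he⟩ := exists_comap_sup_pow_smul_top_le J φ P d
    exact ⟨e, Submodule.dualAnnihilator_anti he⟩

theorem sigma_dual_eq_dual_colon_general (J I : Ideal A) (f : A) :
    (adicDual K J I).map (LinearMap.mulLeft K f).dualMap =
      adicDual K J (I.colon (Ideal.span {f})) := by
  rw [colon_span_singleton_eq_comap_mulLeft]
  exact map_dualMap_adicDual K J (LinearMap.mulLeft A f) I

end AdicDualMap

section MacaulayDual

theorem mem_dualAnnihilator_pow_idealOfVars_iff {σ R : Type*} [CommSemiring R] {d : ℕ}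
    {p : Module.Dual R (MvPolynomial σ R)} :
    p ∈ ((idealOfVars σ R ^ d).restrictScalars R).dualAnnihilator ↔
      ∀ m : σ →₀ ℕ, d ≤ m.degree → p (monomial m 1) = 0 := by
  rw [pow_idealOfVars, restrictScalars_restrictSupportIdeal, restrictSupport_eq_span,
    ← SetLike.mem_coe, Submodule.coe_dualAnnihilator_span]
  simp [Set.subset_def]

variable {n : ℕ}

theorem mem_macaulayDual_iff {p : Module.Dual ℂ (Rn n)} :
    p ∈ MacaulayDual n ↔
      ∃ d : ℕ, p ∈ ((idealOfVars (Fin n) ℂ ^ d).restrictScalars ℂ).dualAnnihilator := by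
  simp only [mem_dualAnnihilator_pow_idealOfVars_iff]
  constructor
  · rintro ⟨d, hd⟩
    exact ⟨d + 1, hd⟩
  · rintro ⟨d, hd⟩
    exact ⟨d, fun m hm ↦ hd m hm.le⟩

theorem annIdeal_eq_dualAnnihilator (I : Ideal (Rn n)) :
    annIdeal I = (I.restrictScalars ℂ).dualAnnihilator := by
  ext p
  rw [Submodule.mem_dualAnnihilator]
  rfl

theorem dualOf_eq_adicDual (I : Ideal (Rn n)) :
    dualOf I = adicDual ℂ (idealOfVars (Fin n) ℂ) I := by
  ext p
  rw [dualOf, Submodule.mem_inf, mem_macaulayDual_iff, annIdeal_eq_dualAnnihilator,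
    mem_adicDual_iff]
  simp only [smul_eq_mul, Ideal.mul_top]

end MacaulayDual

/-- `σ_f D₀[I] = D₀[I : ⟨f⟩]`. -/
theorem sigma_dual_eq_dual_colon (n : ℕ) (I : Ideal (Rn n)) (f : Rn n) :
    Submodule.map (sigma f) (dualOf I) = dualOf (I.colon (Ideal.span {f})) := by
  rw [dualOf_eq_adicDual, dualOf_eq_adicDual]
  exact sigma_dual_eq_dual_colon_general ℂ _ I f
end
end

section
/- Let I be an ideal of R = ℂ[x₁,…,xₙ], let ≻ be a graded monomial order on ℕⁿ, and let J = in_≥(IR₀) ∩ R be the monomial ideal in R generated by the ≻-minimal lead monomials of nonzero elements of the contraction IR₀ ∩ R. Then the local Hilbert functions of I and of its initial ideal agree: for every d ≥ 0, dim_ℂ D₀^d[I] = dim_ℂ D₀^d[J]. -/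
open MvPolynomial

noncomputable section

/-!
`D₀^d[I]` is the annihilator of `I + 𝔪 ^ (d + 1)`, hence the dual of `R / (I + 𝔪 ^ (d + 1))`. If the
basis vectors of a space `V` are ordered and `W` is a subspace, then the basis vectors that do not
lead an element of `W` span a complement of `W`, provided that all but finitely many basis vectors
lie in `W`: a leading basis vector is, modulo `W`, a combination of later ones. Hence `dim V / W`
depends only on the leading indices of `W`. For `W = I + 𝔪 ^ (d + 1)` these are the lead exponents
of `I` together with all exponents of degree greater than `d`, because the order is graded. Finally
`I` and `J` have the same lead exponents: the lead monomial is multiplicative and a polynomial `h`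
with `h(0) ≠ 0` has lead monomial `1`, so passing to `IR₀ ∩ R` creates no new lead monomials, and
the lead exponents of `I` form an upper set, so neither does passing to the monomial ideal they
generate.
-/

section LeadIndices

variable {ι K V : Type*} [Field K] [AddCommGroup V] [Module K V]
  {r : ι → ι → Prop} {b : Module.Basis ι K V} {W W' : Submodule K V}

/-- The basis index `i` leads `v`: it is the `r`-least index at which `v` has a nonzero coordinate.
For the monomial basis of `Rn n` this unfolds to `IsLeadMonomial`. -/
def IsLeadIndex (r : ι → ι → Prop) (b : Module.Basis ι K V) (v : V) (i : ι) : Prop :=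
  b.repr v i ≠ 0 ∧ ∀ j, b.repr v j ≠ 0 → j ≠ i → r i j

/-- The leading indices of the elements of `s`. The vector `0` has none, so it need not be
excluded. -/
def leadIndices (r : ι → ι → Prop) (b : Module.Basis ι K V) (s : Set V) : Set ι :=
  {i | ∃ v ∈ s, IsLeadIndex r b v i}

lemma isLeadIndex_self (r : ι → ι → Prop) (b : Module.Basis ι K V) (i : ι) :
    IsLeadIndex r b (b i) i := by
  refine ⟨by simp, fun j hj hji => absurd ?_ hj⟩
  rw [b.repr_self, Finsupp.single_eq_of_ne hji]

lemma leadIndices_mono {s t : Set V} (hst : s ⊆ t) : leadIndices r b s ⊆ leadIndices r b t :=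
  fun _ ⟨v, hv, hi⟩ => ⟨v, hst hv, hi⟩

lemma exists_isLeadIndex [IsStrictTotalOrder ι r] (b : Module.Basis ι K V) {v : V} (hv : v ≠ 0) :
    ∃ i, IsLeadIndex r b v i := by
  classical
  let := linearOrderOfSTO r
  have hsupp : (b.repr v).support.Nonempty := by simpa using hv
  refine ⟨(b.repr v).support.min' hsupp,
    Finsupp.mem_support_iff.1 (Finset.min'_mem _ _), fun j hj hji => ?_⟩
  exact (Finset.min'_le _ j (Finsupp.mem_support_iff.2 hj)).lt_of_ne hji.symm

lemma disjoint_span_compl_leadIndices [IsStrictTotalOrder ι r] (b : Module.Basis ι K V)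
    (W : Submodule K V) : Disjoint W (Submodule.span K (b '' (leadIndices r b W)ᶜ)) := by
  rw [Submodule.disjoint_def]
  intro v hvW hv
  by_contra hv0
  obtain ⟨i, hi⟩ := exists_isLeadIndex (r := r) b hv0
  exact b.mem_span_image.1 hv (Finsupp.mem_support_iff.2 hi.1) ⟨v, hvW, hi⟩

lemma IsLeadIndex.basis_mem {v : V} {i : ι} (hi : IsLeadIndex r b v i) (hv : v ∈ W)
    (hlater : ∀ j, r i j → b j ∈ W) : b i ∈ W := by
  classical
  have hsum : b.repr v i • b i + ∑ j ∈ (b.repr v).support.erase i, b.repr v j • b j = v := by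
    rw [Finset.add_sum_erase _ (fun j => b.repr v j • b j) (Finsupp.mem_support_iff.2 hi.1)]
    exact b.linearCombination_repr v
  have hrest : ∑ j ∈ (b.repr v).support.erase i, b.repr v j • b j ∈ W :=
    W.sum_mem fun j hj => W.smul_mem _ <| hlater j <|
      hi.2 j (Finsupp.mem_support_iff.1 (Finset.mem_of_mem_erase hj)) (Finset.ne_of_mem_erase hj)
  rwa [← hsum, W.add_mem_iff_left hrest, W.smul_mem_iff hi.1] at hv

lemma codisjoint_span_compl_leadIndices
    (hW : {i | b i ∉ W}.WellFoundedOn (Function.swap r)) :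
    Codisjoint W (Submodule.span K (b '' (leadIndices r b W)ᶜ)) := by
  set C := Submodule.span K (b '' (leadIndices r b W)ᶜ)
  have basis_mem (i : ι) : b i ∈ W ⊔ C := by
    by_cases hiW : b i ∈ W
    · exact Submodule.mem_sup_left hiW
    refine hW.induction (P := fun i => b i ∈ W ⊔ C) hiW fun i _ ih => ?_
    by_cases hi : i ∈ leadIndices r b W
    · obtain ⟨v, hv, hvi⟩ := hi
      refine hvi.basis_mem (Submodule.mem_sup_left hv) fun j hij => ?_
      by_cases hjW : b j ∈ W
      · exact Submodule.mem_sup_left hjW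
      · exact ih j hjW hij
    · exact Submodule.mem_sup_right (Submodule.subset_span ⟨i, hi, rfl⟩)
  rw [codisjoint_iff, eq_top_iff, ← b.span_eq, Submodule.span_le]
  exact Set.range_subset_iff.2 basis_mem

theorem isCompl_span_compl_leadIndices [IsStrictTotalOrder ι r]
    (hW : {i | b i ∉ W}.WellFoundedOn (Function.swap r)) :
    IsCompl W (Submodule.span K (b '' (leadIndices r b W)ᶜ)) :=
  ⟨disjoint_span_compl_leadIndices b W, codisjoint_span_compl_leadIndices hW⟩

theorem rank_dualAnnihilator_eq_of_leadIndices_eq [IsStrictTotalOrder ι r]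
    (hW : {i | b i ∉ W}.WellFoundedOn (Function.swap r))
    (hW' : {i | b i ∉ W'}.WellFoundedOn (Function.swap r))
    (h : leadIndices r b W = leadIndices r b W') :
    Module.rank K W.dualAnnihilator = Module.rank K W'.dualAnnihilator := by
  have hC' := isCompl_span_compl_leadIndices hW'
  rw [← h] at hC'
  let e : (V ⧸ W') ≃ₗ[K] (V ⧸ W) :=
    Submodule.quotientEquivOfIsCompl _ _ hC' ≪≫ₗ
      (Submodule.quotientEquivOfIsCompl _ _ (isCompl_span_compl_leadIndices hW)).symm
  exact (W.dualQuotEquivDualAnnihilator.symm ≪≫ₗ e.dualMap ≪≫ₗ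
    W'.dualQuotEquivDualAnnihilator).rank_eq

lemma leadIndices_sup_span_image {S : Set ι} (hS : ∀ i ∉ S, ∀ j ∈ S, r i j) :
    leadIndices r b (W ⊔ Submodule.span K (b '' S) : Submodule K V) = leadIndices r b W ∪ S := by
  refine Set.Subset.antisymm ?_ (Set.union_subset (leadIndices_mono ?_) fun i hi => ?_)
  · rintro i ⟨v, hv, hvi, hlater⟩
    obtain ⟨w, hw, s, hs, rfl⟩ := Submodule.mem_sup.1 hv
    refine or_iff_not_imp_right.2 fun hiS => ?_
    have repr_eq {j : ι} (hj : j ∉ S) : b.repr (w + s) j = b.repr w j := by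
      have : b.repr s j = 0 := Finsupp.notMem_support_iff.1 fun h => hj (b.mem_span_image.1 hs h)
      rw [map_add, Finsupp.add_apply, this, add_zero]
    refine ⟨w, hw, repr_eq hiS ▸ hvi, fun j hj hji => ?_⟩
    by_cases hjS : j ∈ S
    · exact hS i hiS j hjS
    · exact hlater j (repr_eq hjS ▸ hj) hji
  · exact SetLike.coe_subset_coe.2 le_sup_left
  · have hbi : b i ∈ W ⊔ Submodule.span K (b '' S) :=
      Submodule.mem_sup_right (Submodule.subset_span ⟨i, hi, rfl⟩)
    exact ⟨b i, hbi, isLeadIndex_self r b i⟩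

end LeadIndices

section LeadExponents

variable {n : ℕ} {lt : (Fin n →₀ ℕ) → (Fin n →₀ ℕ) → Prop}
  {f g : Rn n} {α β : Fin n →₀ ℕ}

lemma IsGradedMonomialOrder.isStrictTotalOrder (hlt : IsGradedMonomialOrder lt) :
    IsStrictTotalOrder (Fin n →₀ ℕ) lt where
  irrefl := hlt.irrefl
  trans := hlt.trans
  trichotomous a b hab hba := by
    by_contra hne
    exact (hlt.total a b hne).elim hab hba

lemma IsGradedMonomialOrder.zero_lt (hlt : IsGradedMonomialOrder lt) (hα : α ≠ 0) : lt 0 α := by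
  refine hlt.deg_compat 0 α ?_
  change Finsupp.degree (0 : Fin n →₀ ℕ) < Finsupp.degree α
  rwa [map_zero, Nat.pos_iff_ne_zero, Ne, Finsupp.degree_eq_zero_iff]

lemma IsGradedMonomialOrder.isLeadMonomial_zero (hlt : IsGradedMonomialOrder lt)
    (hf : eval (0 : Fin n → ℂ) f ≠ 0) : IsLeadMonomial lt f 0 := by
  refine ⟨?_, fun _ _ hγ => hlt.zero_lt hγ⟩
  rwa [eval_zero] at hf

lemma IsGradedMonomialOrder.add_lt_add_of_isLeadMonomial (hlt : IsGradedMonomialOrder lt)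
    (hf : IsLeadMonomial lt f α) (hg : IsLeadMonomial lt g β) {a b : Fin n →₀ ℕ}
    (ha : coeff a f ≠ 0) (hb : coeff b g ≠ 0) (hab : ¬(a = α ∧ b = β)) :
    lt (α + β) (a + b) := by
  have add_left {b : Fin n →₀ ℕ} (a : Fin n →₀ ℕ) (h : lt β b) : lt (a + β) (a + b) := by
    simpa only [add_comm a] using hlt.add_compat β b a h
  by_cases haα : a = α
  · subst haα
    exact add_left a (hg.2 b hb fun h => hab ⟨rfl, h⟩)
  · have hαa : lt (α + β) (a + β) := hlt.add_compat α a β (hf.2 a ha haα)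
    by_cases hbβ : b = β
    · rwa [hbβ]
    · exact hlt.trans _ _ _ hαa (add_left a (hg.2 b hb hbβ))

lemma IsLeadMonomial.mul (hlt : IsGradedMonomialOrder lt) (hf : IsLeadMonomial lt f α)
    (hg : IsLeadMonomial lt g β) : IsLeadMonomial lt (f * g) (α + β) := by
  classical
  constructor
  · rw [coeff_mul, Finset.sum_eq_single (α, β)]
    · exact mul_ne_zero hf.1 hg.1
    · rintro ⟨a, b⟩ hab hne
      by_contra hprod
      have hlt_self := hlt.add_lt_add_of_isLeadMonomial hf hg (left_ne_zero_of_mul hprod)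
        (right_ne_zero_of_mul hprod) fun h => hne (Prod.ext h.1 h.2)
      rw [Finset.HasAntidiagonal.mem_antidiagonal.1 hab] at hlt_self
      exact hlt.irrefl _ hlt_self
    · simp
  · intro γ hγ hne
    obtain ⟨a, ha, b, hb, rfl⟩ :=
      Finset.mem_add.1 (support_mul f g (mem_support_iff.2 hγ))
    refine hlt.add_lt_add_of_isLeadMonomial hf hg (mem_support_iff.1 ha) (mem_support_iff.1 hb) ?_
    rintro ⟨rfl, rfl⟩
    exact hne rfl

/-- The exponents of the lead monomials of the elements of `s`. -/
abbrev leadExponents (lt : (Fin n →₀ ℕ) → (Fin n →₀ ℕ) → Prop) (s : Set (Rn n)) :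
    Set (Fin n →₀ ℕ) :=
  leadIndices lt (basisMonomials (Fin n) ℂ) s

lemma mem_leadExponents {s : Set (Rn n)} :
    β ∈ leadExponents lt s ↔ ∃ f ∈ s, IsLeadMonomial lt f β :=
  Iff.rfl

lemma leadExponents_contraction (hlt : IsGradedMonomialOrder lt) (I : Ideal (Rn n)) :
    leadExponents lt (contraction I) = leadExponents lt I := by
  refine Set.Subset.antisymm ?_ (leadIndices_mono fun f hf => ⟨1, by simp, by simpa using hf⟩)
  rintro β ⟨g, ⟨h, hh, hhg⟩, hg⟩
  refine mem_leadExponents.2 ⟨h * g, hhg, ?_⟩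
  have hhg_lead : IsLeadMonomial lt (h * g) (0 + β) := (hlt.isLeadMonomial_zero hh).mul hlt hg
  rwa [zero_add] at hhg_lead

lemma isUpperSet_leadExponents (hlt : IsGradedMonomialOrder lt) (I : Ideal (Rn n)) :
    IsUpperSet (leadExponents lt I) := by
  rintro β γ hβγ ⟨f, hf, hβ⟩
  obtain ⟨δ, rfl⟩ := le_iff_exists_add'.1 hβγ
  have hδ : IsLeadMonomial lt (monomial δ 1) δ := isLeadIndex_self lt (basisMonomials _ ℂ) δ
  exact mem_leadExponents.2 ⟨monomial δ 1 * f, I.mul_mem_left _ hf, hδ.mul hlt hβ⟩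

lemma initialIdeal_eq_span_monomial (hlt : IsGradedMonomialOrder lt) (I : Ideal (Rn n)) :
    initialIdeal lt I = Ideal.span ((fun β => monomial β (1 : ℂ)) '' leadExponents lt I) := by
  rw [initialIdeal, ← leadExponents_contraction hlt]
  congr 1
  ext q
  constructor
  · rintro ⟨g, hg, -, β, hβ, rfl⟩
    exact ⟨β, ⟨g, hg, hβ⟩, rfl⟩
  · rintro ⟨β, ⟨g, hg, hβ⟩, rfl⟩
    exact ⟨g, hg, fun h => hβ.1 (by simp [h]), β, hβ, rfl⟩

theorem leadExponents_initialIdeal (hlt : IsGradedMonomialOrder lt) (I : Ideal (Rn n)) :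
    leadExponents lt (initialIdeal lt I) = leadExponents lt I := by
  rw [initialIdeal_eq_span_monomial hlt]
  refine Set.Subset.antisymm ?_ fun β hβ => ?_
  · rintro γ ⟨f, hf, hγ⟩
    obtain ⟨β, hβ, hβγ⟩ := mem_ideal_span_monomial_image.1 hf γ (mem_support_iff.2 hγ.1)
    exact isUpperSet_leadExponents hlt I hβγ hβ
  · exact ⟨monomial β 1, Ideal.subset_span ⟨β, hβ, rfl⟩,
      isLeadIndex_self lt (basisMonomials _ ℂ) β⟩

/-- The vector space underlying `I + 𝔪 ^ (d + 1)`, whose annihilator is `D₀^d[I]`. The power of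
`𝔪` is encoded as the span of the monomials of degree greater than `d`. -/
def idealAddHighDegree (I : Ideal (Rn n)) (d : ℕ) : Submodule ℂ (Rn n) :=
  I.restrictScalars ℂ ⊔ Submodule.span ℂ (basisMonomials (Fin n) ℂ '' {m | d < mdeg m})

lemma truncDualOf_eq_dualAnnihilator (I : Ideal (Rn n)) (d : ℕ) :
    truncDualOf I d = (idealAddHighDegree I d).dualAnnihilator := by
  ext p
  rw [idealAddHighDegree, Submodule.dualAnnihilator_sup_eq, inf_comm, truncDualOf,
    Submodule.mem_inf, Submodule.mem_inf]
  refine and_congr ?_ ?_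
  · rw [← SetLike.mem_coe (p := Submodule.dualAnnihilator _), Submodule.coe_dualAnnihilator_span,
      Set.mem_ofPred_eq, Set.image_subset_iff]
    rfl
  · rw [Submodule.mem_dualAnnihilator]
    rfl

lemma wellFoundedOn_monomial_notMem_idealAddHighDegree (hlt : IsGradedMonomialOrder lt)
    (I : Ideal (Rn n)) (d : ℕ) :
    {m | basisMonomials (Fin n) ℂ m ∉ idealAddHighDegree I d}.WellFoundedOn
      (Function.swap lt) := by
  have := hlt.isStrictTotalOrder
  have hfinite : {m : Fin n →₀ ℕ | mdeg m ≤ d}.Finite := Finsupp.finite_of_degree_le d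
  refine (hfinite.subset fun m hm => ?_).wellFoundedOn
  exact not_lt.1 fun hdeg : d < mdeg m =>
    hm (Submodule.mem_sup_right (Submodule.subset_span ⟨m, hdeg, rfl⟩))

lemma leadExponents_idealAddHighDegree (hlt : IsGradedMonomialOrder lt) (I : Ideal (Rn n))
    (d : ℕ) :
    leadExponents lt (idealAddHighDegree I d) = leadExponents lt I ∪ {m | d < mdeg m} :=
  leadIndices_sup_span_image fun α hα β hβ => hlt.deg_compat α β ((not_lt.1 hα).trans_lt hβ)

end LeadExponents

/-- the local Hilbert functions of `I` and of its initial ideal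
`J = in_≥(IR₀) ∩ R` agree: `dim_ℂ D₀^d[I] = dim_ℂ D₀^d[J]` for every `d ≥ 0`. -/
theorem hilbert_function_of_initial_ideal (n : ℕ) (I : Ideal (Rn n))
    (lt : (Fin n →₀ ℕ) → (Fin n →₀ ℕ) → Prop) (hlt : IsGradedMonomialOrder lt)
    (d : ℕ) :
    Module.rank ℂ (truncDualOf I d) = Module.rank ℂ (truncDualOf (initialIdeal lt I) d) := by
  have := hlt.isStrictTotalOrder
  have leadExponents_eq : leadExponents lt (idealAddHighDegree I d) =
      leadExponents lt (idealAddHighDegree (initialIdeal lt I) d) := by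
    simp only [leadExponents_idealAddHighDegree hlt, leadExponents_initialIdeal hlt]
  rw [truncDualOf_eq_dualAnnihilator, truncDualOf_eq_dualAnnihilator]
  exact rank_dualAnnihilator_eq_of_leadIndices_eq
    (wellFoundedOn_monomial_notMem_idealAddHighDegree hlt I d)
    (wellFoundedOn_monomial_notMem_idealAddHighDegree hlt _ d) leadExponents_eq
end
end
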